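/- Every finite set of closed normal λ-terms whose elements have pairwise distinct βη-normal forms has a storage operator. -/

import Mathlib

/- Pure untyped λ-calculus with de Bruijn indices. -/

inductive Lam : Type
  | var : ℕ → Lam
  | app : Lam → Lam → Lam
  | abs : Lam → Lam
  deriving DecidableEq

namespace Lam

/-- Renaming of free variables. -/
def rename (ρ : ℕ → ℕ) : Lam → Lam
  | var i => var (ρ i)
  | app u v => app (u.rename ρ) (v.rename ρ)
  | abs u => abs (u.rename (fun i => match i with | 0 => 0 | j+1 => ρ j + 1))

/-- Lifting of a simultaneous substitution under a binder. -/
def liftSub (σ : ℕ → Lam) : ℕ → Lam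
  | 0 => var 0
  | i+1 => (σ i).rename (· + 1)

/-- Simultaneous (capture-avoiding) substitution of the free variables. -/
def subst (σ : ℕ → Lam) : Lam → Lam
  | var i => σ i
  | app u v => app (u.subst σ) (v.subst σ)
  | abs u => abs (u.subst (liftSub σ))

/-- `u.subst0 v` is `u[v/x]` for the first variable. -/
def subst0 (u v : Lam) : Lam :=
  u.subst (fun i => match i with | 0 => v | j+1 => var j)

/-- One step of β-reduction (anywhere in the term). -/
inductive Beta : Lam → Lam → Prop
  | beta (u v : Lam) : Beta (app (abs u) v) (u.subst0 v)
  | appL {u u'} (v) : Beta u u' → Beta (app u v) (app u' v)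
  | appR (u) {v v'} : Beta v v' → Beta (app u v) (app u v')
  | abs {u u'} : Beta u u' → Beta (abs u) (abs u')

/-- β-equivalence `≃β`. -/
def BetaEq : Lam → Lam → Prop := Relation.EqvGen Beta

/-- A term is normal if it has no β-redex. -/
def Normal (t : Lam) : Prop := ∀ u, ¬ Beta t u

def IsAbs : Lam → Prop
  | abs _ => True
  | _ => False

/-- One step of head reduction: reduction of the head redex. -/
inductive HeadStep : Lam → Lam → Prop
  | beta (u v) : HeadStep (app (abs u) v) (u.subst0 v)
  | appL {u u'} (v) : ¬ u.IsAbs → HeadStep u u' → HeadStep (app u v) (app u' v)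
  | abs {u u'} : HeadStep u u' → HeadStep (abs u) (abs u')

/-- `HeadRedN n u v` : `u` head-reduces to `v` in exactly `n` steps (`u ≻ v` with `n(u,v) = n`). -/
inductive HeadRedN : ℕ → Lam → Lam → Prop
  | refl (u) : HeadRedN 0 u u
  | step {n u v w} : HeadStep u v → HeadRedN n v w → HeadRedN (n+1) u w

/-- `u ≻ v` : `v` is obtained from `u` by some head reductions. -/
def HeadRed (u v : Lam) : Prop := ∃ n, HeadRedN n u v

/-- Head normal form. -/
def HeadNF (t : Lam) : Prop := ∀ u, ¬ HeadStep t u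

def ClosedUnder : ℕ → Lam → Prop
  | k, var i => i < k
  | k, app u v => ClosedUnder k u ∧ ClosedUnder k v
  | k, abs u => ClosedUnder (k+1) u

/-- Closed λ-term. -/
def Closed (t : Lam) : Prop := ClosedUnder 0 t

/-- `(f)ⁿx` : `iterApp f n x = (f)(f)…(f)x`. -/
def iterApp (f : Lam) : ℕ → Lam → Lam
  | 0, x => x
  | n+1, x => app f (iterApp f n x)

/-- The Church integer `n̲ = λxλf(f)ⁿx`. -/
def church (n : ℕ) : Lam := abs (abs (iterApp (var 0) n (var 1)))

/-- `(t)w₁…wₖ`. -/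
def appList (t : Lam) (ws : List Lam) : Lam := ws.foldl app t

/-- `T` is a storage operator for the closed normal term `t` :
there is `τ ≃β t` such that for every `θ ≃β t` there is a substitution `σ`
(not touching the fresh variable `f`, represented by the de Bruijn index `0`)
with `(T)θf ≻ (f)σ(τ)`. -/
def IsStorageFor (T t : Lam) : Prop :=
  Closed T ∧ ∃ τ, BetaEq τ t ∧ ∀ θ, BetaEq θ t →
    ∃ σ : ℕ → Lam, σ 0 = var 0 ∧
      HeadRed (app (app T θ) (var 0)) (app (var 0) (τ.subst σ))

end Lam

namespace Lam

/-- One step of η-reduction (anywhere in the term): `λx(t)x → t` when `x ∉ Fv(t)`. -/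
inductive Eta : Lam → Lam → Prop
  | eta (u : Lam) : Eta (abs (app (u.rename (· + 1)) (var 0))) u
  | appL {u u'} (v) : Eta u u' → Eta (app u v) (app u' v)
  | appR (u) {v v'} : Eta v v' → Eta (app u v) (app u v')
  | abs {u u'} : Eta u u' → Eta (abs u) (abs u')

/-- βη-equivalence (two terms are βη-equivalent iff they have the same βη-normal form). -/
def BetaEtaEq : Lam → Lam → Prop := Relation.EqvGen (fun u v => Beta u v ∨ Eta u v)

end Lam


namespace Lam

/-! ### substitution theory -/

def up (ρ : ℕ → ℕ) : ℕ → ℕ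
  | 0 => 0
  | j+1 => ρ j + 1

def scons (v : Lam) (σ : ℕ → Lam) : ℕ → Lam
  | 0 => v
  | j+1 => σ j

theorem rename_abs (ρ : ℕ → ℕ) (u : Lam) : (abs u).rename ρ = abs (u.rename (up ρ)) := by
  have : up ρ = (fun i => match i with | 0 => 0 | j+1 => ρ j + 1) := by
    funext i; cases i <;> rfl
  rw [this]; rfl

theorem subst0_eq (u v : Lam) : u.subst0 v = u.subst (scons v var) := by
  unfold subst0; congr 1

theorem rename_rename (t : Lam) : ∀ (ρ ρ' : ℕ → ℕ),
    (t.rename ρ).rename ρ' = t.rename (ρ' ∘ ρ) := by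
  induction t with
  | var i => intros; rfl
  | app u v hu hv => intros; simp [rename, hu, hv]
  | abs u hu =>
    intro ρ ρ'
    simp only [rename_abs, hu]
    congr 2; funext i; cases i <;> rfl

theorem rename_subst (t : Lam) : ∀ (ρ : ℕ → ℕ) (σ : ℕ → Lam),
    (t.rename ρ).subst σ = t.subst (σ ∘ ρ) := by
  induction t with
  | var i => intros; rfl
  | app u v hu hv => intros; simp [rename, subst, hu, hv]
  | abs u hu =>
    intro ρ σ
    simp only [rename_abs, subst, hu]
    congr 2; funext i; cases i <;> rfl

theorem subst_rename (t : Lam) : ∀ (σ : ℕ → Lam) (ρ : ℕ → ℕ),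
    (t.subst σ).rename ρ = t.subst (fun i => (σ i).rename ρ) := by
  induction t with
  | var i => intros; rfl
  | app u v hu hv => intros; simp [rename, subst, hu, hv]
  | abs u hu =>
    intro σ ρ
    simp only [rename_abs, subst, hu]
    congr 2; funext i
    cases i with
    | zero => rfl
    | succ i =>
      simp only [liftSub, rename_rename]
      congr 1

theorem subst_subst (t : Lam) : ∀ (σ σ' : ℕ → Lam),
    (t.subst σ).subst σ' = t.subst (fun i => (σ i).subst σ') := by
  induction t with
  | var i => intros; rfl
  | app u v hu hv => intros; simp [subst, hu, hv]
  | abs u hu =>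
    intro σ σ'
    simp only [subst, hu]
    congr 2; funext i
    cases i with
    | zero => rfl
    | succ i =>
      simp only [liftSub, rename_subst, subst_rename]
      congr 1

theorem subst_closedUnder (t : Lam) : ∀ (k : ℕ) (σ : ℕ → Lam), ClosedUnder k t →
    (∀ i < k, σ i = var i) → t.subst σ = t := by
  induction t with
  | var i => intro k σ h hs; exact hs i h
  | app u v hu hv => intro k σ h hs; simp [subst, hu k σ h.1 hs, hv k σ h.2 hs]
  | abs u hu =>
    intro k σ h hs
    simp only [subst]
    rw [hu (k+1) _ h]
    intro i hi
    cases i with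
    | zero => rfl
    | succ i => simp [liftSub, hs i (by omega), rename]

theorem Closed.subst {t : Lam} (h : Closed t) (σ : ℕ → Lam) : t.subst σ = t :=
  subst_closedUnder t 0 σ h (by intro i hi; omega)

theorem rename_eq_subst (t : Lam) : ∀ (ρ : ℕ → ℕ), t.rename ρ = t.subst (fun i => var (ρ i)) := by
  induction t with
  | var i => intros; rfl
  | app u v hu hv => intros; simp [rename, subst, hu, hv]
  | abs u hu =>
    intro ρ
    simp only [rename_abs, subst, hu]
    congr 2; funext i; cases i <;> rfl

theorem Closed.rename {t : Lam} (h : Closed t) (ρ : ℕ → ℕ) : t.rename ρ = t := by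
  rw [rename_eq_subst, h.subst]

theorem subst_var (t : Lam) : t.subst var = t := by
  induction t with
  | var i => rfl
  | app u v hu hv => simp [subst, hu, hv]
  | abs u hu =>
    simp only [subst]
    congr 1
    have : liftSub var = var := by funext i; cases i <;> rfl
    rw [this, hu]

theorem shift_subst (t v : Lam) (σ : ℕ → Lam) :
    (t.rename (· + 1)).subst (scons v σ) = t.subst σ := by
  rw [rename_subst]; rfl

theorem liftSub_scons (u v : Lam) (σ : ℕ → Lam) :
    (u.subst (liftSub σ)).subst0 v = u.subst (scons v σ) := by
  rw [subst0_eq, subst_subst]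
  congr 1; funext i
  cases i with
  | zero => rfl
  | succ i => simp only [liftSub, shift_subst, subst_var]; rfl

theorem subst0_subst (u v : Lam) (σ : ℕ → Lam) :
    (u.subst0 v).subst σ = (u.subst (liftSub σ)).subst0 (v.subst σ) := by
  rw [liftSub_scons, subst0_eq, subst_subst]
  congr 1; funext i; cases i <;> rfl

theorem subst0_rename (u v : Lam) (ρ : ℕ → ℕ) :
    (u.subst0 v).rename ρ = (u.rename (up ρ)).subst0 (v.rename ρ) := by
  rw [subst0_eq, subst0_eq, subst_rename, rename_subst]
  congr 1; funext i; cases i <;> rfl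

theorem closedUnder_mono (t : Lam) : ∀ k k', k ≤ k' → ClosedUnder k t → ClosedUnder k' t := by
  induction t with
  | var i => intro k k' h h'; exact lt_of_lt_of_le h' h
  | app u v hu hv => intro k k' h h'; exact ⟨hu _ _ h h'.1, hv _ _ h h'.2⟩
  | abs u hu => intro k k' h h'; exact hu _ _ (by omega) h'

theorem Closed.under {t : Lam} (h : Closed t) (k : ℕ) : ClosedUnder k t :=
  closedUnder_mono t 0 k (Nat.zero_le _) h

theorem closedUnder_rename (t : Lam) : ∀ (k k' : ℕ) (ρ : ℕ → ℕ), ClosedUnder k t →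
    (∀ i < k, ρ i < k') → ClosedUnder k' (t.rename ρ) := by
  induction t with
  | var i => intro k k' ρ h hs; exact hs i h
  | app u v hu hv => intro k k' ρ h hs; exact ⟨hu _ _ _ h.1 hs, hv _ _ _ h.2 hs⟩
  | abs u hu =>
    intro k k' ρ h hs
    rw [rename_abs]
    refine hu (k+1) (k'+1) _ h ?_
    intro i hi
    cases i with
    | zero => simp [up]
    | succ i => have := hs i (by omega); simp [up]; omega

/-! ### parallel and weak head reduction -/

inductive Par : Lam → Lam → Prop
  | var (i) : Par (var i) (var i)
  | app {u u' v v'} : Par u u' → Par v v' → Par (app u v) (app u' v')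
  | abs {u u'} : Par u u' → Par (abs u) (abs u')
  | beta {u u' v v'} : Par u u' → Par v v' → Par (app (abs u) v) (u'.subst0 v')

theorem Par.refl (u : Lam) : Par u u := by
  induction u with
  | var i => exact .var i
  | app u v hu hv => exact .app hu hv
  | abs u hu => exact .abs hu

theorem Beta.par {u v : Lam} (h : Beta u v) : Par u v := by
  induction h with
  | beta u v => exact .beta (.refl _) (.refl _)
  | appL v _ ih => exact .app ih (.refl _)
  | appR u _ ih => exact .app (.refl _) ih
  | abs _ ih => exact .abs ih

theorem Par.rename {u v : Lam} (h : Par u v) : ∀ ρ : ℕ → ℕ, Par (u.rename ρ) (v.rename ρ) := by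
  induction h with
  | var i => intro ρ; exact .var _
  | app _ _ h1 h2 => intro ρ; exact .app (h1 ρ) (h2 ρ)
  | abs _ h1 => intro ρ; rw [rename_abs, rename_abs]; exact .abs (h1 _)
  | beta _ _ h1 h2 =>
    intro ρ
    rw [subst0_rename]
    simp only [Lam.rename]
    rw [← Lam.rename, rename_abs]
    exact .beta (h1 _) (h2 _)

theorem par_lift {σ σ' : ℕ → Lam} (h : ∀ i, Par (σ i) (σ' i)) (i : ℕ) :
    Par (liftSub σ i) (liftSub σ' i) := by
  cases i with
  | zero => exact .var 0
  | succ i => exact (h i).rename _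

theorem Par.subst {u v : Lam} (h : Par u v) : ∀ {σ σ' : ℕ → Lam}, (∀ i, Par (σ i) (σ' i)) →
    Par (u.subst σ) (v.subst σ') := by
  induction h with
  | var i => intro σ σ' hs; exact hs i
  | app _ _ h1 h2 => intro σ σ' hs; exact .app (h1 hs) (h2 hs)
  | abs _ h1 => intro σ σ' hs; exact .abs (h1 (par_lift hs))
  | beta _ _ h1 h2 =>
    intro σ σ' hs
    rw [subst0_subst]
    exact .beta (h1 (par_lift hs)) (h2 hs)

theorem par_scons {v v' : Lam} (h : Par v v') (i : ℕ) : Par (scons v var i) (scons v' var i) := by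
  cases i with
  | zero => exact h
  | succ i => exact .var i

theorem Par.subst0 {u u' v v' : Lam} (h : Par u u') (h' : Par v v') :
    Par (u.subst0 v) (u'.subst0 v') := by
  rw [subst0_eq, subst0_eq]; exact h.subst (par_scons h')

inductive WH : Lam → Lam → Prop
  | beta (u v) : WH (app (abs u) v) (u.subst0 v)
  | appL {u u'} (v) : WH u u' → WH (app u v) (app u' v)

abbrev WHs := Relation.ReflTransGen WH

inductive IPar : Lam → Lam → Prop
  | var (i) : IPar (var i) (var i)
  | app {u u' v v'} : IPar u u' → Par v v' → IPar (app u v) (app u' v')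
  | abs {u u'} : Par u u' → IPar (abs u) (abs u')

theorem WH.subst {u v : Lam} (h : WH u v) (σ : ℕ → Lam) : WH (u.subst σ) (v.subst σ) := by
  induction h with
  | beta u v => rw [subst0_subst]; exact .beta _ _
  | appL v _ ih => exact .appL _ ih

theorem WHs.subst {u v : Lam} (h : WHs u v) (σ : ℕ → Lam) : WHs (u.subst σ) (v.subst σ) := by
  induction h with
  | refl => exact .refl
  | tail _ h ih => exact ih.tail (h.subst σ)

theorem WHs.appL {u v : Lam} (h : WHs u v) (w : Lam) : WHs (app u w) (app v w) := by
  induction h with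
  | refl => exact .refl
  | tail _ h ih => exact ih.tail (h.appL w)

def Fac (u v : Lam) : Prop := ∃ w, WHs u w ∧ IPar w v

theorem IPar.subst {u v : Lam} (h : IPar u v) {σ σ' : ℕ → Lam} (hs : ∀ i, Par (σ i) (σ' i))
    (hf : ∀ i, Fac (σ i) (σ' i)) : Fac (u.subst σ) (v.subst σ') := by
  induction h with
  | var i => exact hf i
  | app _ h2 ih =>
    obtain ⟨w, hw, hi⟩ := ih
    exact ⟨_, hw.appL _, .app hi (h2.subst hs)⟩
  | abs h => exact ⟨_, .refl, .abs (h.subst (par_lift hs))⟩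

theorem Par.fac {u v : Lam} (h : Par u v) : Fac u v := by
  induction h with
  | var i => exact ⟨_, .refl, .var i⟩
  | app _ h2 ih _ =>
    obtain ⟨w, hw, hi⟩ := ih
    exact ⟨_, hw.appL _, .app hi h2⟩
  | abs h _ => exact ⟨_, .refl, .abs h⟩
  | @beta u u' v v' h1 h2 ih1 ih2 =>
    obtain ⟨w, hw, hi⟩ := ih1
    have : Fac (w.subst (scons v Lam.var)) (u'.subst (scons v' Lam.var)) := by
      refine hi.subst (par_scons h2) ?_
      intro i
      cases i with
      | zero => exact ih2
      | succ i => exact ⟨_, .refl, .var i⟩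
    obtain ⟨w', hw', hi'⟩ := this
    refine ⟨w', ?_, by rw [subst0_eq]; exact hi'⟩
    refine Relation.ReflTransGen.head (WH.beta u v) ?_
    rw [subst0_eq]
    exact (hw.subst _).trans hw'

theorem IPar.step {v v' : Lam} (h : WH v v') : ∀ {w}, IPar w v → ∃ w', WH w w' ∧ Par w' v' := by
  induction h with
  | beta u v =>
    intro w hw
    cases hw with
    | app h1 h2 =>
      cases h1 with
      | abs h1 => exact ⟨_, .beta _ _, h1.subst0 h2⟩
  | appL v _ ih =>
    intro w hw
    cases hw with
    | app h1 h2 =>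
      obtain ⟨w', h, h'⟩ := ih h1
      exact ⟨_, .appL _ h, .app h' h2⟩

theorem Par.back {v : Lam} {i : ℕ} (h : WHs v (Lam.var i)) : ∀ {u}, Par u v → WHs u (Lam.var i) := by
  induction h using Relation.ReflTransGen.head_induction_on with
  | refl =>
    intro u hu
    obtain ⟨w, hw, hi⟩ := hu.fac
    cases hi
    exact hw
  | head h _ ih =>
    intro u hu
    obtain ⟨w, hw, hi⟩ := hu.fac
    obtain ⟨w', h1, h2⟩ := hi.step h
    exact (hw.tail h1).trans (ih h2)

theorem WH.forth {u u' : Lam} (h : WH u u') : ∀ {v}, Par u v →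
    ∃ v', WHs v v' ∧ Par u' v' := by
  induction h with
  | beta u v =>
    intro w hw
    cases hw with
    | app h1 h2 =>
      cases h1 with
      | abs h1 => exact ⟨_, .single (.beta _ _), h1.subst0 h2⟩
    | beta h1 h2 => exact ⟨_, .refl, h1.subst0 h2⟩
  | appL v h ih =>
    intro w hw
    cases hw with
    | app h1 h2 =>
      obtain ⟨v', h3, h4⟩ := ih h1
      exact ⟨_, h3.appL _, .app h4 h2⟩
    | beta h1 h2 => cases h

theorem Par.forth {u : Lam} {i : ℕ} (h : WHs u (Lam.var i)) : ∀ {v}, Par u v → WHs v (Lam.var i) := by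
  induction h using Relation.ReflTransGen.head_induction_on with
  | refl =>
    intro v hv
    cases hv
    exact .refl
  | head h _ ih =>
    intro v hv
    obtain ⟨v', h1, h2⟩ := h.forth hv
    exact h1.trans (ih h2)

theorem BetaEq.whs_iff {u v : Lam} (h : BetaEq u v) (i : ℕ) : WHs u (var i) ↔ WHs v (var i) := by
  induction h with
  | rel x y h => exact ⟨fun h' => h.par.forth h', fun h' => h.par.back h'⟩
  | refl => exact Iff.rfl
  | symm _ _ _ ih => exact ih.symm
  | trans _ _ _ _ _ h1 h2 => exact h1.trans h2

theorem WH.head {u v : Lam} (h : WH u v) : HeadStep u v := by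
  induction h with
  | beta u v => exact .beta u v
  | appL v h ih =>
    refine .appL _ ?_ ih
    cases h <;> simp [IsAbs]

theorem WHs.head {u v : Lam} (h : WHs u v) : HeadRed u v := by
  induction h using Relation.ReflTransGen.head_induction_on with
  | refl => exact ⟨0, .refl _⟩
  | head h _ ih =>
    obtain ⟨n, hn⟩ := ih
    exact ⟨n+1, .step h.head hn⟩

/-! ### β-equivalence -/

theorem BetaEq.refl (u : Lam) : BetaEq u u := Relation.EqvGen.refl u
theorem BetaEq.symm {u v : Lam} (h : BetaEq u v) : BetaEq v u := Relation.EqvGen.symm _ _ h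
theorem BetaEq.trans {u v w : Lam} (h : BetaEq u v) (h' : BetaEq v w) : BetaEq u w :=
  Relation.EqvGen.trans _ _ _ h h'

theorem BetaEq.map {u v : Lam} (f : Lam → Lam) (hf : ∀ a b, Beta a b → BetaEq (f a) (f b))
    (h : BetaEq u v) : BetaEq (f u) (f v) := by
  induction h with
  | rel x y h => exact hf _ _ h
  | refl => exact .refl _
  | symm _ _ _ ih => exact ih.symm
  | trans _ _ _ _ _ h1 h2 => exact h1.trans h2

theorem BetaEq.app {u u' v v' : Lam} (h : BetaEq u u') (h' : BetaEq v v') :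
    BetaEq (app u v) (app u' v') :=
  (BetaEq.map (fun x => Lam.app x v) (fun _ _ h => .rel _ _ (.appL _ h)) h).trans
    (BetaEq.map (fun x => Lam.app u' x) (fun _ _ h => .rel _ _ (.appR _ h)) h')

theorem BetaEq.appList {u u' : Lam} (h : BetaEq u u') (l : List Lam) :
    BetaEq (appList u l) (appList u' l) := by
  induction l generalizing u u' with
  | nil => exact h
  | cons a l ih => exact ih (h.app (.refl a))

theorem BetaEq.beta (u v : Lam) : BetaEq (Lam.app (Lam.abs u) v) (u.subst (scons v var)) := by
  rw [← subst0_eq]; exact .rel _ _ (.beta _ _)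

theorem Beta.subst {u v : Lam} (h : Beta u v) : ∀ σ : ℕ → Lam, Beta (u.subst σ) (v.subst σ) := by
  induction h with
  | beta u v => intro σ; rw [subst0_subst]; exact .beta _ _
  | appL v _ ih => intro σ; exact .appL _ (ih σ)
  | appR u _ ih => intro σ; exact .appR _ (ih σ)
  | abs _ ih => intro σ; exact .abs (ih _)

theorem BetaEq.subst {u v : Lam} (h : BetaEq u v) (σ : ℕ → Lam) :
    BetaEq (u.subst σ) (v.subst σ) :=
  BetaEq.map (fun x => x.subst σ) (fun _ _ h => .rel _ _ (h.subst σ)) h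

theorem appList_append (u : Lam) (l l' : List Lam) :
    appList u (l ++ l') = appList (appList u l) l' := by
  simp [Lam.appList, List.foldl_append]

theorem appList_subst (u : Lam) (l : List Lam) (σ : ℕ → Lam) :
    (appList u l).subst σ = appList (u.subst σ) (l.map (subst σ)) := by
  induction l generalizing u with
  | nil => rfl
  | cons a l ih => exact ih _

theorem appList_rename (u : Lam) (l : List Lam) (ρ : ℕ → ℕ) :
    (appList u l).rename ρ = appList (u.rename ρ) (l.map (rename ρ)) := by
  induction l generalizing u with
  | nil => rfl
  | cons a l ih => exact ih _

theorem appList_closedUnder (k : ℕ) (u : Lam) (l : List Lam) (hu : ClosedUnder k u)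
    (hl : ∀ a ∈ l, ClosedUnder k a) : ClosedUnder k (appList u l) := by
  induction l generalizing u with
  | nil => exact hu
  | cons a l ih =>
    exact ih _ ⟨hu, hl a (by simp)⟩ (fun b hb => hl b (by simp [hb]))

theorem WHs.appList {u v : Lam} (h : WHs u v) (l : List Lam) :
    WHs (appList u l) (appList v l) := by
  induction l generalizing u v with
  | nil => exact h
  | cons a l ih => exact ih (h.appL a)

/-! ### combinators -/

/-- drops `r` arguments -/
def J : ℕ → Lam
  | 0 => abs (var 0)
  | r+1 => abs (abs (app (J r) (var 1)))

theorem J_closed : ∀ r, Closed (J r)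
  | 0 => by simp [J, Closed, ClosedUnder]
  | r+1 => by simp [J, Closed, ClosedUnder, (J_closed r).under]

theorem J_spec (r : ℕ) : ∀ (c : Lam) (l : List Lam), l.length = r →
    BetaEq (appList (app (J r) c) l) c := by
  induction r with
  | zero =>
    intro c l hl
    obtain rfl := List.length_eq_zero_iff.1 hl
    exact .beta _ _
  | succ r ih =>
    intro c l hl
    match l, hl with
    | a :: l, hl =>
      refine BetaEq.trans ?_ (ih c l (by simpa using hl))
      refine BetaEq.appList ?_ l
      refine ((BetaEq.beta _ _).app (.refl a)).trans ?_
      refine (BetaEq.beta _ _).trans ?_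
      simp only [subst, (J_closed r).subst, liftSub, scons, shift_subst, subst_var]
      exact .refl _

/-- `R M r c z₁ … z_M (r junk arguments) = c z₁ … z_M` -/
def R (r : ℕ) : ℕ → Lam
  | 0 => J r
  | M+1 => abs (abs (app (R r M) (app (var 1) (var 0))))

theorem R_closed (r : ℕ) : ∀ M, Closed (R r M)
  | 0 => J_closed r
  | M+1 => by simp [R, Closed, ClosedUnder, (R_closed r M).under]

theorem R_spec (r M : ℕ) : ∀ (c : Lam) (z l : List Lam), z.length = M → l.length = r →
    BetaEq (appList (app (R r M) c) (z ++ l)) (appList c z) := by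
  induction M with
  | zero =>
    intro c z l hz hl
    obtain rfl := List.length_eq_zero_iff.1 hz
    exact J_spec r c l hl
  | succ M ih =>
    intro c z l hz hl
    match z, hz with
    | a :: z, hz =>
      refine BetaEq.trans ?_ (ih (app c a) z l (by simpa using hz) hl)
      refine BetaEq.appList ?_ (z ++ l)
      refine ((BetaEq.beta _ _).app (.refl a)).trans ?_
      refine (BetaEq.beta _ _).trans ?_
      simp only [subst, (R_closed r M).subst, liftSub, scons, shift_subst, subst_var]
      exact .refl _

/-- `Q p c z₁ … z_p w = c w z₁ … z_p` -/
def Q : ℕ → Lam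
  | 0 => abs (var 0)
  | p+1 => abs (abs (app (Q p) (abs (app (app (var 2) (var 0)) (var 1)))))

theorem Q_closed : ∀ p, Closed (Q p)
  | 0 => by simp [Q, Closed, ClosedUnder]
  | p+1 => by simp [Q, Closed, ClosedUnder, (Q_closed p).under]

theorem Q_spec (p : ℕ) : ∀ (c w : Lam) (z : List Lam), z.length = p →
    BetaEq (app (appList (app (Q p) c) z) w) (appList (app c w) z) := by
  induction p with
  | zero =>
    intro c w z hz
    obtain rfl := List.length_eq_zero_iff.1 hz
    exact (BetaEq.beta _ _).app (.refl w)
  | succ p ih =>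
    intro c w z hz
    match z, hz with
    | a :: z, hz =>
      have h1 : BetaEq (app (app (Q (p+1)) c) a)
          (app (Q p) (abs (app (app (c.rename (· + 1)) (var 0)) (a.rename (· + 1))))) := by
        refine ((BetaEq.beta _ _).app (.refl a)).trans ?_
        refine (BetaEq.beta _ _).trans ?_
        simp only [subst, (Q_closed p).subst, liftSub, scons, rename, subst_subst, rename_subst,
          Function.comp_def, rename_rename]
        rw [← rename_eq_subst]
        exact .refl _
      refine ((h1.appList z).app (.refl w)).trans ?_
      refine (ih _ w z (by simpa using hz)).trans ?_
      refine BetaEq.appList ?_ z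
      refine (BetaEq.beta _ _).trans ?_
      simp only [subst, scons, shift_subst, subst_var]
      exact .refl _

def P (p : ℕ) : Lam := app (Q p) (abs (var 0))

theorem P_closed (p : ℕ) : Closed (P p) := ⟨Q_closed p, by simp [ClosedUnder]⟩

theorem P_spec (p : ℕ) (w : Lam) (z : List Lam) (hz : z.length = p) :
    BetaEq (app (appList (P p) z) w) (appList w z) :=
  (Q_spec p _ w z hz).trans (BetaEq.appList (BetaEq.beta _ _) z)

/-- selectors -/
def U : ℕ → ℕ → Lam
  | 0, _ => abs (var 0)
  | n+1, 0 => J n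
  | n+1, i+1 => abs (U n i)

theorem U_closed : ∀ n i, Closed (U n i)
  | 0, _ => by simp [U, Closed, ClosedUnder]
  | n+1, 0 => J_closed n
  | n+1, i+1 => (U_closed n i).under 1

theorem U_spec : ∀ (n i : ℕ) (l : List Lam) (h : i < l.length), l.length = n →
    BetaEq (appList (U n i) l) l[i]
  | 0, _, l, h, hl => by omega
  | n+1, 0, a :: l, h, hl => J_spec n a l (by simpa using hl)
  | n+1, i+1, a :: l, h, hl => by
    refine BetaEq.trans ?_ (U_spec n i l (by simpa using h) (by simpa using hl))
    refine BetaEq.appList ?_ l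
    refine (BetaEq.beta _ _).trans ?_
    rw [(U_closed n i).subst]
    exact .refl _

/-! ### βη-equivalence -/

theorem BetaEtaEq.map {u v : Lam} (f : Lam → Lam)
    (hb : ∀ a b, Beta a b → Beta (f a) (f b)) (he : ∀ a b, Eta a b → Eta (f a) (f b))
    (h : BetaEtaEq u v) : BetaEtaEq (f u) (f v) := by
  induction h with
  | rel x y h => exact .rel _ _ (h.imp (hb _ _) (he _ _))
  | refl => exact .refl _
  | symm _ _ _ ih => exact .symm _ _ ih
  | trans _ _ _ _ _ h1 h2 => exact .trans _ _ _ h1 h2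

theorem BetaEtaEq.abs {u v : Lam} (h : BetaEtaEq u v) : BetaEtaEq (Lam.abs u) (Lam.abs v) :=
  h.map _ (fun _ _ => .abs) (fun _ _ => .abs)

theorem BetaEtaEq.app {u u' v v' : Lam} (h : BetaEtaEq u u') (h' : BetaEtaEq v v') :
    BetaEtaEq (Lam.app u v) (Lam.app u' v') :=
  .trans _ _ _ (h.map (fun x => Lam.app x v) (fun _ _ => .appL _) (fun _ _ => .appL _))
    (h'.map (fun x => Lam.app u' x) (fun _ _ => .appR _) (fun _ _ => .appR _))

theorem BetaEtaEq.appList {l l' : List Lam} (h : List.Forall₂ BetaEtaEq l l') :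
    ∀ {u u'}, BetaEtaEq u u' → BetaEtaEq (appList u l) (appList u' l') := by
  induction h with
  | nil => intro u u' h; exact h
  | cons h _ ih => intro u u' h'; exact ih (h'.app h)

theorem forall₂_refl (l : List Lam) : List.Forall₂ BetaEtaEq l l :=
  List.forall₂_same.2 (fun _ _ => .refl _)

/-! ### normal terms -/

def nf : Lam → Prop
  | var _ => True
  | app u v => nf u ∧ nf v ∧ ¬ u.IsAbs
  | abs u => nf u

def size : Lam → ℕ
  | var _ => 1
  | app u v => u.size + v.size
  | abs u => u.size + 1

theorem size_pos (t : Lam) : 1 ≤ t.size := by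
  induction t <;> simp [size] <;> omega

theorem Normal.nf {t : Lam} (h : Normal t) : nf t := by
  induction t with
  | var i => trivial
  | app u v hu hv =>
    refine ⟨hu fun w hw => h _ (.appL _ hw), hv fun w hw => h _ (.appR _ hw), ?_⟩
    intro ha
    cases u with
    | var i => exact ha
    | app a b => exact ha
    | abs a => exact h _ (.beta _ _)
  | abs u hu => exact hu fun w hw => h _ (.abs hw)

theorem size_rename (t : Lam) : ∀ ρ : ℕ → ℕ, (t.rename ρ).size = t.size := by
  induction t with
  | var i => intro ρ; rfl
  | app u v hu hv => intro ρ; simp [rename, size, hu, hv]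
  | abs u hu => intro ρ; simp [rename_abs, size, hu]

theorem isAbs_rename (t : Lam) (ρ : ℕ → ℕ) : (t.rename ρ).IsAbs ↔ t.IsAbs := by
  cases t <;> simp [rename, IsAbs]

theorem nf_rename (t : Lam) : ∀ ρ : ℕ → ℕ, nf t → nf (t.rename ρ) := by
  induction t with
  | var i => intro ρ _; trivial
  | app u v hu hv =>
    intro ρ h
    exact ⟨hu _ h.1, hv _ h.2.1, fun h' => h.2.2 ((isAbs_rename _ _).1 h')⟩
  | abs u hu => intro ρ h; rw [rename_abs]; exact hu _ h

def Good (k ℓ : ℕ) (t : Lam) : Prop := nf t ∧ size t ≤ k ∧ ClosedUnder ℓ t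

def NE (k L ℓ : ℕ) (t : Lam) : Prop :=
  ∃ x ss, t = appList (var x) ss ∧ x < ℓ ∧ ss.length ≤ L ∧ ∀ s ∈ ss, Good k ℓ s

theorem neutral (ℓ : ℕ) (t : Lam) : nf t → ¬ t.IsAbs → ClosedUnder ℓ t →
    ∃ x ss, t = appList (var x) ss ∧ x < ℓ ∧ ss.length + 1 ≤ t.size ∧
      ∀ s ∈ ss, nf s ∧ size s + 1 ≤ t.size ∧ ClosedUnder ℓ s := by
  induction t with
  | var i => intro _ _ h; exact ⟨i, [], rfl, h, by simp [size], by simp⟩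
  | abs u hu => intro _ h; exact absurd trivial h
  | app u v hu hv =>
    intro hn _ hc
    obtain ⟨x, ss, h1, h2, h3, h4⟩ := hu hn.1 hn.2.2 hc.1
    have := size_pos v
    have := size_pos u
    refine ⟨x, ss ++ [v], by rw [appList_append, ← h1]; rfl, h2, ?_, ?_⟩
    · simp [size]; omega
    · intro s hs
      rw [List.mem_append, List.mem_singleton] at hs
      rcases hs with hs | rfl
      · obtain ⟨a, b, c⟩ := h4 s hs
        exact ⟨a, by simp [size]; omega, c⟩
      · exact ⟨hn.2.1, by simp [size]; omega, hc.2⟩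

def peel : Lam → Lam
  | abs b => b
  | t => app (t.rename (· + 1)) (var 0)

theorem peel_eq {t : Lam} (h : ¬ t.IsAbs) : peel t = app (t.rename (· + 1)) (var 0) := by
  cases t with
  | var i => rfl
  | app u v => rfl
  | abs u => exact absurd trivial h

theorem abs_peel (t : Lam) : BetaEtaEq (abs (peel t)) t := by
  by_cases h : t.IsAbs
  · cases t with
    | var i => exact absurd h (by simp [IsAbs])
    | app u v => exact absurd h (by simp [IsAbs])
    | abs u => exact .refl _
  · rw [peel_eq h]; exact .rel _ _ (.inr (.eta t))

theorem peel_subst (t v : Lam) (σ : ℕ → Lam) :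
    BetaEq (app (t.subst σ) v) ((peel t).subst (scons v σ)) := by
  by_cases h : t.IsAbs
  · cases t with
    | var i => exact absurd h (by simp [IsAbs])
    | app u v => exact absurd h (by simp [IsAbs])
    | abs u =>
      simp only [peel]
      rw [← liftSub_scons]
      exact .rel _ _ (.beta _ _)
  · rw [peel_eq h]
    simp only [subst, shift_subst, scons]
    exact .refl _

def PE (k L : ℕ) : ℕ → ℕ → Lam → Prop
  | 0, ℓ, t => NE k L ℓ t
  | n+1, ℓ, t => PE k L n (ℓ+1) (peel t)

theorem appList_not_isAbs (x : ℕ) (l : List Lam) : ¬ (appList (var x) l).IsAbs := by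
  induction l using List.reverseRecOn with
  | nil => simp [appList, IsAbs]
  | append_singleton l a _ => rw [appList_append]; simp [appList, IsAbs]

theorem NE.pe (k L : ℕ) (hk : 1 ≤ k) : ∀ (n m ℓ : ℕ) (t : Lam), NE k m ℓ t → m + n ≤ L →
    PE k L n ℓ t := by
  intro n
  induction n with
  | zero =>
    rintro m ℓ t ⟨x, ss, h1, h2, h3, h4⟩ h
    exact ⟨x, ss, h1, h2, by omega, h4⟩
  | succ n ih =>
    rintro m ℓ t ⟨x, ss, rfl, h2, h3, h4⟩ h
    refine ih (m+1) (ℓ+1) _ ?_ (by omega)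
    rw [peel_eq (appList_not_isAbs _ _)]
    refine ⟨x+1, ss.map (rename (· + 1)) ++ [var 0], ?_, by omega, by simp; omega, ?_⟩
    · rw [appList_append, appList_rename]; rfl
    · intro s hs
      rw [List.mem_append, List.mem_singleton, List.mem_map] at hs
      rcases hs with ⟨s, hs, rfl⟩ | rfl
      · obtain ⟨a, b, c⟩ := h4 s hs
        exact ⟨nf_rename _ _ a, by rw [size_rename]; exact b,
          closedUnder_rename s ℓ _ _ c (by intro i hi; simpa using hi)⟩
      · exact ⟨trivial, by simpa [size] using hk, by simp [ClosedUnder]⟩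

theorem good_pe (k L : ℕ) : ∀ (n ℓ : ℕ) (t : Lam), nf t → ClosedUnder ℓ t → size t ≤ n + 1 →
    n ≤ k → k + n ≤ L → PE k L n ℓ t := by
  intro n
  induction n with
  | zero =>
    intro ℓ t hn hc hs _ _
    cases t with
    | var i => exact ⟨i, [], rfl, hc, by simp, by simp⟩
    | app u v =>
      have := size_pos u; have := size_pos v
      simp [size] at hs; omega
    | abs u =>
      have := size_pos u
      simp [size] at hs; omega
  | succ n ih =>
    intro ℓ t hn hc hs hk hL
    by_cases h : t.IsAbs
    · cases t with
      | var i => exact absurd h (by simp [IsAbs])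
      | app u v => exact absurd h (by simp [IsAbs])
      | abs u => exact ih (ℓ+1) u hn hc (by simpa [size] using hs) (by omega) (by omega)
    · obtain ⟨x, ss, h1, h2, h3, h4⟩ := neutral ℓ t hn h hc
      refine NE.pe k L (by omega) (n+1) k ℓ t ⟨x, ss, h1, h2, by omega, ?_⟩ hL
      intro s hs
      obtain ⟨a, b, c⟩ := h4 s hs
      exact ⟨a, by omega, c⟩

/-! ### the decoders -/

/-- environment of permutators -/
def S (L : ℕ) : ℕ → ℕ → Lam
  | 0 => var
  | ℓ+1 => scons (P ((ℓ+1) * (L+1))) (S L ℓ)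

theorem S_eq (L : ℕ) : ∀ (ℓ x : ℕ), x < ℓ → S L ℓ x = P ((ℓ - x) * (L+1))
  | ℓ+1, 0, _ => rfl
  | ℓ+1, x+1, h => by
    have := S_eq L ℓ x (by omega)
    rw [show ℓ + 1 - (x+1) = ℓ - x by omega]
    exact this

def Inv (g : Lam → Lam) : Prop := (∀ t, Closed (g t)) ∧ ∀ t t', BetaEtaEq t t' → g t = g t'

def InvL (g : List Lam → Lam) : Prop :=
  (∀ t, Closed (g t)) ∧ ∀ t t', List.Forall₂ BetaEtaEq t t' → g t = g t'

def Dec (L ℓ : ℕ) (A : Lam → Prop) : Prop :=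
  ∀ g, Inv g → ∃ D, Closed D ∧ ∀ t, A t → BetaEq (app D (t.subst (S L ℓ))) (g t)

theorem tuple {L ℓ : ℕ} {A : Lam → Prop} (h : Dec L ℓ A) : ∀ (M : ℕ) (g : List Lam → Lam),
    InvL g → ∃ D, Closed D ∧ ∀ ss : List Lam, ss.length = M → (∀ s ∈ ss, A s) →
      BetaEq (appList D (ss.map (subst (S L ℓ)))) (g ss) := by
  intro M
  induction M with
  | zero =>
    intro g hg
    refine ⟨g [], hg.1 _, ?_⟩
    intro ss hs _
    obtain rfl := List.length_eq_zero_iff.1 hs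
    exact .refl _
  | succ M ih =>
    intro g hg
    choose F hF1 hF2 using ih
    have hc : ∀ g1 g2 h1 h2, g1 = g2 → F g1 h1 = F g2 h2 := by
      rintro g1 g2 h1 h2 rfl; rfl
    have hi : ∀ s, InvL (fun ss => g (s :: ss)) := fun s =>
      ⟨fun _ => hg.1 _, fun t t' ht => hg.2 _ _ (.cons (.refl _) ht)⟩
    obtain ⟨D, hD, hD'⟩ := h (fun s => F _ (hi s)) ⟨fun s => hF1 _ _, by
      intro s s' hs
      apply hc
      funext ss
      exact hg.2 _ _ (.cons hs (forall₂_refl _))⟩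
    refine ⟨D, hD, ?_⟩
    intro ss hs hA
    match ss, hs with
    | s :: ss, hs =>
      refine BetaEq.trans ?_ (hF2 _ (hi s) ss (by simpa using hs) fun a ha => hA a (by simp [ha]))
      exact BetaEq.appList (hD' s (hA s (by simp))) _

theorem code_inj (C a b m n : ℕ) (hm : m < C) (hn : n < C) (ha : 1 ≤ a) (hb : 1 ≤ b)
    (h : a * C - m = b * C - n) : a = b ∧ m = n := by
  have key : ∀ a b m n : ℕ, m < C → n < C → 1 ≤ a → a < b → a * C - m ≠ b * C - n := by
    intro a b m n hm hn ha hab h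
    have h1 : (a+1) * C ≤ b * C := Nat.mul_le_mul_right _ hab
    have h2 : 1 * C ≤ a * C := Nat.mul_le_mul_right _ ha
    rw [Nat.add_mul] at h1
    omega
  rcases lt_trichotomy a b with hab | rfl | hab
  · exact absurd h (key a b m n hm hn ha hab)
  · have h2 : 1 * C ≤ a * C := Nat.mul_le_mul_right _ ha
    exact ⟨rfl, by omega⟩
  · exact absurd h.symm (key b a n m hn hm hb hab)

theorem dec_ne {k L ℓ : ℕ} (h : Dec L ℓ (Good k ℓ)) : Dec L ℓ (NE k L ℓ) := by
  intro g hg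
  have hi : ∀ x, InvL (fun ss => g (appList (var x) ss)) := fun x =>
    ⟨fun _ => hg.1 _, fun t t' ht => hg.2 _ _ (BetaEtaEq.appList ht (.refl _))⟩
  choose E hE1 hE2 using fun x M => tuple h M _ (hi x)
  set A := ℓ * (L+1) + 1 with hA
  have ha : ∃ a : ℕ → Lam, (∀ j, Closed (a j)) ∧ ∀ x M, x < ℓ → M ≤ L →
      a ((ℓ - x) * (L+1) - M) = app (R (A-1) M) (E x M) := by
    classical
    refine ⟨fun j => if hj : ∃ q : ℕ × ℕ, q.1 < ℓ ∧ q.2 ≤ L ∧ j = (ℓ - q.1) * (L+1) - q.2 then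
      app (R (A-1) hj.choose.2) (E hj.choose.1 hj.choose.2) else abs (var 0), ?_, ?_⟩
    · intro j
      dsimp only
      split_ifs
      · exact ⟨R_closed _ _, hE1 _ _⟩
      · simp [Closed, ClosedUnder]
    · intro x M hx hM
      have hj : ∃ q : ℕ × ℕ, q.1 < ℓ ∧ q.2 ≤ L ∧
        (ℓ - x) * (L+1) - M = (ℓ - q.1) * (L+1) - q.2 := ⟨(x, M), hx, hM, rfl⟩
      dsimp only
      rw [dif_pos hj]
      obtain ⟨h1, h2, h3⟩ := hj.choose_spec
      obtain ⟨h4, h5⟩ := code_inj (L+1) _ _ _ _ (by omega) (by omega) (by omega) (by omega) h3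
      rw [← h5, show hj.choose.1 = x by omega]
  obtain ⟨a, ha1, ha2⟩ := ha
  set as := (List.range A).map a with has
  have hasc : ∀ b ∈ as, Closed b := by
    intro b hb
    obtain ⟨j, _, rfl⟩ := List.mem_map.1 hb
    exact ha1 j
  refine ⟨abs (appList (var 0) as), ?_, ?_⟩
  · exact appList_closedUnder 1 _ _ (by simp [ClosedUnder]) fun b hb => (hasc b hb).under 1
  rintro t ⟨x, ss, rfl, hx, hM, hss⟩
  refine (BetaEq.beta _ _).trans ?_
  rw [appList_subst, List.map_congr_left (g := id) (fun b hb => (hasc b hb).subst _), List.map_id]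
  simp only [subst, scons]
  rw [appList_subst]
  simp only [subst, S_eq L ℓ x hx]
  refine BetaEq.trans ?_ (hE2 x ss.length ss rfl hss)
  set zs := ss.map (subst (S L ℓ)) with hzs
  have hzl : zs.length = ss.length := by simp [hzs]
  set p := (ℓ - x) * (L+1) with hp
  have hp1 : 1 * (L+1) ≤ p := Nat.mul_le_mul_right _ (by omega)
  have hp2 : p ≤ ℓ * (L+1) := Nat.mul_le_mul_right _ (by omega)
  have hal : as.length = A := by simp [has]
  have hj : p - ss.length < as.length := by omega
  have hsplit : as = as.take (p - ss.length) ++ ([as[p - ss.length]] ++ as.drop (p - ss.length + 1)) := by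
    simp
  have hget : as[p - ss.length] = app (R (A-1) ss.length) (E x ss.length) := by
    rw [← ha2 x _ hx hM]; simp [has, hp]
  rw [hget] at hsplit
  rw [hsplit, appList_append, ← appList_append (P p), appList_append _ [_]]
  refine (BetaEq.appList (P_spec p _ _ ?_) _).trans ?_
  · simp; omega
  rw [← appList_append, List.append_assoc]
  refine R_spec _ _ _ _ _ hzl ?_
  simp; omega

theorem dec_pe {k L : ℕ} (h : ∀ ℓ, Dec L ℓ (Good k ℓ)) : ∀ n ℓ, Dec L ℓ (PE k L n ℓ) := by
  intro n
  induction n with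
  | zero => intro ℓ; exact dec_ne (h ℓ)
  | succ n ih =>
    intro ℓ g hg
    obtain ⟨D, hD, hD'⟩ := ih (ℓ+1) (fun t => g (abs t))
      ⟨fun _ => hg.1 _, fun t t' ht => hg.2 _ _ ht.abs⟩
    have hP := P_closed ((ℓ+1) * (L+1))
    refine ⟨abs (app D (app (var 0) (P ((ℓ+1) * (L+1))))), ?_, ?_⟩
    · exact ⟨hD.under 1, by simp [ClosedUnder], hP.under 1⟩
    · intro t ht
      refine (BetaEq.beta _ _).trans ?_
      simp only [subst, scons, hD.subst, hP.subst]
      rw [← hg.2 _ _ (abs_peel t)]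
      refine BetaEq.trans ?_ (hD' (peel t) ht)
      exact (BetaEq.refl D).app (peel_subst t _ _)

theorem dec_good (L : ℕ) : ∀ k, 2 * k ≤ L + 2 → ∀ ℓ, Dec L ℓ (Good k ℓ) := by
  intro k
  induction k with
  | zero =>
    intro _ ℓ g hg
    refine ⟨abs (var 0), by simp [Closed, ClosedUnder], ?_⟩
    rintro t ⟨_, h, _⟩
    have := size_pos t
    omega
  | succ k ih =>
    intro hk ℓ g hg
    obtain ⟨D, hD, hD'⟩ := dec_pe (ih (by omega)) k ℓ g hg
    refine ⟨D, hD, ?_⟩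
    rintro t ⟨h1, h2, h3⟩
    exact hD' t (good_pe k L k ℓ t h1 h3 h2 le_rfl (by omega))

theorem separation (ts : List Lam) (hts : ∀ t ∈ ts, Closed t ∧ Normal t) (hnd : ts.Nodup)
    (hdist : ∀ t ∈ ts, ∀ t' ∈ ts, t ≠ t' → ¬ BetaEtaEq t t') :
    ∃ D, Closed D ∧ ∀ i (hi : i < ts.length), BetaEq (app D ts[i]) (U ts.length i) := by
  set k := (ts.map size).sum with hk
  obtain ⟨D, hD, hD'⟩ := dec_good (2 * k) k (by omega) 0
    (fun t => U ts.length (sInf {i | ∃ hi : i < ts.length, BetaEtaEq t ts[i]}))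
    ⟨fun _ => U_closed _ _, by
      intro t t' ht
      dsimp only
      congr 2
      ext i
      exact ⟨fun ⟨hi, h⟩ => ⟨hi, .trans _ _ _ (.symm _ _ ht) h⟩,
        fun ⟨hi, h⟩ => ⟨hi, .trans _ _ _ ht h⟩⟩⟩
  refine ⟨D, hD, ?_⟩
  intro i hi
  have hmem : ts[i] ∈ ts := List.getElem_mem hi
  have h1 := hD' ts[i] ⟨(hts _ hmem).2.nf,
    List.single_le_sum (by simp) _ (List.mem_map_of_mem hmem), (hts _ hmem).1⟩
  rw [(hts _ hmem).1.subst] at h1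
  have : {j | ∃ hj : j < ts.length, BetaEtaEq ts[i] ts[j]} = {i} := by
    ext j
    constructor
    · rintro ⟨hj, h⟩
      by_contra hne
      refine hdist _ hmem _ (List.getElem_mem hj) ?_ h
      intro he
      exact hne ((hnd.getElem_inj_iff.1 he).symm)
    · rintro rfl
      exact ⟨hi, .refl _⟩
  rw [this, csInf_singleton] at h1
  exact h1

theorem storage (ts : List Lam) (hts : ∀ t ∈ ts, Closed t ∧ Normal t) (hnd : ts.Nodup)
    (hdist : ∀ t ∈ ts, ∀ t' ∈ ts, t ≠ t' → ¬ BetaEtaEq t t') :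
    ∃ T : Lam, ∀ t ∈ ts, IsStorageFor T t := by
  obtain ⟨D, hD, hD'⟩ := separation ts hts hnd hdist
  refine ⟨abs (abs (appList (app D (var 1)) (ts.map (app (var 0))))), ?_⟩
  intro t ht
  refine ⟨?_, t, .refl _, ?_⟩
  · refine appList_closedUnder 2 _ _ ⟨hD.under 2, by simp [ClosedUnder]⟩ ?_
    intro a ha
    obtain ⟨s, hs, rfl⟩ := List.mem_map.1 ha
    exact ⟨by simp [ClosedUnder], (hts s hs).1.under 2⟩
  intro θ hθ
  refine ⟨var, rfl, ?_⟩
  rw [subst_var]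
  apply WHs.head
  obtain ⟨i, hi, rfl⟩ := List.mem_iff_getElem.1 ht
  set n := ts.length with hn
  have hc := (hts _ ht).1
  -- fresh variables
  have e1 : BetaEq (appList (app D (θ.subst (fun i => var (i + n)))) ((List.range n).map var))
      (var i) := by
    have h1 := hθ.subst (fun i => var (i + n))
    rw [hc.subst] at h1
    refine (BetaEq.appList (((BetaEq.refl D).app h1).trans (hD' i hi)) _).trans ?_
    have := U_spec n i ((List.range n).map var) (by simpa using hi) (by simp)
    simpa using this
  have e2 : WHs _ (var i) := (e1.whs_iff i).2 .refl
  have e3 := e2.subst (fun j => if h : j < n then app (var 0) ts[j] else var (j - n))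
  rw [appList_subst] at e3
  simp only [subst, hD.subst, subst_subst, dif_pos hi] at e3
  have e4 : θ.subst (fun i => if h : i + n < n then app (var 0) ts[i + n] else var (i + n - n))
      = θ := by
    refine Eq.trans ?_ (subst_var θ)
    congr 1; funext j; simp
  have e5 : (List.map var (List.range n)).map
      (subst (fun j => if h : j < n then app (var 0) ts[j] else var (j - n)))
      = ts.map (app (var 0)) := by
    apply List.ext_getElem
    · simp [hn]
    · intro j h1 h2
      have : j < n := by simpa using h1
      simp [subst, this]
  rw [e4, e5] at e3
  refine Relation.ReflTransGen.head (.appL _ (.beta _ _)) ?_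
  refine Relation.ReflTransGen.head (b := appList (app D θ) (ts.map (app (var 0)))) ?_ e3
  rw [subst0_eq]
  simp only [subst]
  have e6 : appList (app D θ) (ts.map (app (var 0))) = ((appList (app D (var 1))
      (ts.map (app (var 0)))).subst (liftSub (scons θ var))).subst0 (var 0) := by
    rw [liftSub_scons, appList_subst, List.map_map]
    simp only [subst, scons, hD.subst]
    congr 1
    apply List.map_congr_left
    intro s hs
    simp [subst, scons, (hts s hs).1.subst]
  rw [e6]
  exact .beta _ _

end Lam

open Lam in
/-- Each finite set of closed normal λ-terms having all distinct βη-normal forms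
has a storage operator. -/
theorem stmt9 (F : Finset Lam) (hF : ∀ t ∈ F, Closed t ∧ Normal t)
    (hdist : ∀ t ∈ F, ∀ t' ∈ F, t ≠ t' → ¬ BetaEtaEq t t') :
    ∃ T : Lam, ∀ t ∈ F, IsStorageFor T t := by
  obtain ⟨T, hT⟩ := storage F.toList (fun t ht => hF t (by simpa using ht)) F.nodup_toList
    (fun t ht t' ht' => hdist t (by simpa using ht) t' (by simpa using ht'))
  exact ⟨T, fun t ht => hT t (by simpa using ht)⟩
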